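/- Let L be a first-order language extending the language of rings, and let M be an L-structure whose universe F, equipped with the interpretations of the ring symbols, is a field. Assume Th(M) has finite burden. Then M has uniform finiteness: for every L-formula φ(x; ȳ) with x a single variable, there is n ∈ ℕ such that for every parameter tuple b̄ from F, if the set φ(F; b̄) = {a ∈ F : M ⊨ φ(a; b̄)} has more than n elements, then φ(F; b̄) is infinite. -/

import Mathlib

/- Common model-theoretic definitions. -/

open FirstOrder Set

universe u v w

/-- An inp-pattern of depth `κ` in `nvars` free variables witnessed in the `L`-structure `N`:
formulas `φ α (x̄; ȳ_α)` (with `m α` parameter variables), positive integers `k α`, and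
parameter tuples `b α i` such that each row is `k α`-inconsistent (no tuple of `N` realizes
`φ α (x̄; b α i)` for `k α` distinct values of `i`), while every path is finitely consistent. -/
def IsInpPattern (L : FirstOrder.Language.{u, v}) (N : Type*) [L.Structure N]
    (κ : Type*) (nvars : ℕ) : Prop :=
  ∃ (m : κ → ℕ) (φ : ∀ α : κ, L.Formula (Fin nvars ⊕ Fin (m α)))
    (k : κ → ℕ) (b : ∀ α : κ, ℕ → Fin (m α) → N),
    (∀ α, 1 ≤ k α) ∧
    (∀ α : κ, ¬ ∃ (x : Fin nvars → N) (s : Finset ℕ),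
        k α ≤ s.card ∧ ∀ i ∈ s, (φ α).Realize (Sum.elim x (b α i))) ∧
    (∀ (η : κ → ℕ) (S : Finset κ), ∃ x : Fin nvars → N,
        ∀ α ∈ S, (φ α).Realize (Sum.elim x (b α (η α))))

/-- `Th(M)` has burden at least `n`: some model of `Th(M)` witnesses an inp-pattern of
depth `n` in a single variable. -/
def HasBurdenAtLeast (L : FirstOrder.Language.{u, v}) (M : Type w) [L.Structure M]
    (n : ℕ) : Prop :=
  ∃ N : FirstOrder.Language.Theory.ModelType.{u, v, max u v w} (L.completeTheory M),
    IsInpPattern L N (Fin n) 1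

/-- `Th(M)` has finite burden: for some `n`, no model of `Th(M)` witnesses an inp-pattern of
depth `n + 1` in a single variable. -/
def HasFiniteBurden (L : FirstOrder.Language.{u, v}) (M : Type w) [L.Structure M] : Prop :=
  ∃ n : ℕ, ¬ HasBurdenAtLeast L M (n + 1)

/-- `Th(M)` is strong: no model of `Th(M)` witnesses an inp-pattern of depth `ω` in any
finite tuple of variables. -/
def IsStrong (L : FirstOrder.Language.{u, v}) (M : Type w) [L.Structure M] : Prop :=
  ∀ (N : FirstOrder.Language.Theory.ModelType.{u, v, max u v w} (L.completeTheory M))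
    (nvars : ℕ), ¬ IsInpPattern L N ℕ nvars

/-- A set `D` in a linear order is discrete if each of its points is isolated in it. -/
def DiscreteIn {R : Type*} [LinearOrder R] (D : Set R) : Prop :=
  ∀ x ∈ D, ∃ a b : R, a < x ∧ x < b ∧ Set.Ioo a b ∩ D = {x}

/-- `M` is definably complete: every nonempty definable subset of `R` that is bounded above
has a least upper bound. -/
def DefinablyComplete (L : FirstOrder.Language.{u, v}) (R : Type w)
    [LinearOrder R] [L.Structure R] : Prop :=
  ∀ X : Set R, (Set.univ : Set R).Definable₁ L X → X.Nonempty → BddAbove X →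
    ∃ a : R, IsLUB X a

/-! If uniform finiteness fails, then some definable family has finite members `X` of unbounded
size, so the ring `R` is infinite. A finite subset `X` of an infinite ring without zero divisors
admits coefficients `c` for which `z ↦ ∑ j, c j * z j` is injective on `X ^ d`: each coefficient
only has to avoid finitely many values. The linear form thus codes `X ^ d` by elements of `R`,
and the conditions "the `j`-th coordinate of the tuple coded by `x` is `y`", for `y` in `X`, are
pairwise inconsistent for fixed `j` but independent for distinct `j`. These are `d` rows of
unbounded finite length given by fixed formulas, and an ultraproduct turns them into an
inp-pattern of depth `d`. -/

section InpArray

/-- The combinatorial content of an inp-pattern, for subsets `D α i` of `T` with `i` ranging over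
`I`. Only whole paths are considered, since the arrays of interest have finite depth. Taking `I`
finite gives the finite approximations to inp-patterns. -/
structure IsInpArray {κ T : Type*} (I : Set ℕ) (k : κ → ℕ) (D : κ → ℕ → Set T) : Prop where
  card_lt : ∀ α x (s : Finset ℕ), ↑s ⊆ I → (∀ i ∈ s, x ∈ D α i) → s.card < k α
  path_nonempty : ∀ η : κ → ℕ, (∀ α, η α ∈ I) → ∃ x, ∀ α, x ∈ D α (η α)

variable {κ T : Type*} {I : Set ℕ} {k : κ → ℕ}

theorem IsInpArray.preimage {T' : Type*} {D : κ → ℕ → Set T} (h : IsInpArray I k D) {f : T' → T}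
    (hf : f.Surjective) : IsInpArray I k fun α i => f ⁻¹' D α i where
  card_lt α x := h.card_lt α (f x)
  path_nonempty η hη := by
    obtain ⟨x, hx⟩ := h.path_nonempty η hη
    obtain ⟨y, rfl⟩ := hf x
    exact ⟨y, hx⟩

theorem isInpArray_image_pi {S : Type*} {X : Set S} {f : (κ → S) → T}
    (hf : InjOn f (univ.pi fun _ => X)) {e : ℕ → S} (heX : MapsTo e I X) (he : InjOn e I) :
    IsInpArray I (fun _ => 2) fun j i => f '' {z ∈ univ.pi fun _ => X | z j = e i} where
  card_lt j x s hsI hs := by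
    refine Nat.lt_succ_of_le (Finset.card_le_one.2 fun i hi i' hi' => he (hsI hi) (hsI hi') ?_)
    obtain ⟨z, ⟨hzX, hz⟩, rfl⟩ := hs i hi
    obtain ⟨z', ⟨hzX', hz'⟩, hzz'⟩ := hs i' hi'
    rw [← hz, ← hz', hf hzX' hzX hzz']
  path_nonempty η hη :=
    ⟨f (e ∘ η), fun _ => mem_image_of_mem f ⟨fun l _ => heX (hη l), rfl⟩⟩

end InpArray

section Burden

open FirstOrder.Language Filter

variable {L : FirstOrder.Language.{u, v}} {κ β γ : Type*} {k : κ → ℕ}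

theorem realize_sumElim_ultraproduct {ι : Type*} {U : Ultrafilter ι} {M : ι → Type*}
    [∀ a, L.Structure (M a)] [∀ a, Nonempty (M a)] (φ : L.Formula (γ ⊕ β))
    (x : γ → ∀ a, M a) (y : β → ∀ a, M a) :
    φ.Realize (Sum.elim (fun l => (x l : (U : Filter ι).Product M))
      fun j => (y j : (U : Filter ι).Product M)) ↔
      ∀ᶠ a in U, φ.Realize (Sum.elim (x · a) (y · a)) := by
  convert Ultraproduct.realize_formula_cast (u := U) φ (Sum.elim x y) using 2
  · ext (l | j) <;> rfl
  · congr! 2 with a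
    ext (l | j) <;> rfl

theorem IsInpArray.ultraproduct {ι : Type*} {U : Ultrafilter ι} {M : ι → Type*}
    [∀ a, L.Structure (M a)] [∀ a, Nonempty (M a)] [Finite κ] {φ : κ → L.Formula (γ ⊕ β)}
    {b : κ → ℕ → β → ∀ a, M a} {I : ι → Set ℕ} (hI : ∀ i, ∀ᶠ a in U, i ∈ I a)
    (h : ∀ a, IsInpArray (I a) k
      fun α i => {x : γ → M a | (φ α).Realize (Sum.elim x (b α i · a))}) :
    IsInpArray univ k fun α i => {x : γ → (U : Filter ι).Product M |
      (φ α).Realize (Sum.elim x fun j => (b α i j : (U : Filter ι).Product M))} where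
  card_lt α x s _ hs := by
    choose f hf using fun l => Quotient.exists_rep (x l)
    obtain rfl : (fun l => (f l : (U : Filter ι).Product M)) = x := funext hf
    have hreal : ∀ᶠ a in U, ∀ i ∈ s, (φ α).Realize (Sum.elim (f · a) (b α i · a)) :=
      (eventually_all_finset s).2 fun i hi => (realize_sumElim_ultraproduct ..).1 (hs i hi)
    have hsI : ∀ᶠ a in U, ∀ i ∈ s, i ∈ I a := (eventually_all_finset s).2 fun i _ => hI i
    obtain ⟨a, hreal, hsI⟩ := (hreal.and hsI).exists
    exact (h a).card_lt α (f · a) s hsI hreal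
  path_nonempty η _ := by
    have hη : ∀ᶠ a in U, ∃ x : γ → M a, ∀ α, (φ α).Realize (Sum.elim x (b α (η α) · a)) :=
      (eventually_all.2 fun α => hI (η α)).mono fun a => (h a).path_nonempty η
    obtain ⟨x, hx⟩ := skolem.1 hη
    exact ⟨fun l => ((x · l) : (U : Filter ι).Product M), fun α =>
      (realize_sumElim_ultraproduct ..).2 (hx.mono fun _ h => h α)⟩

theorem IsInpArray.isInpPattern {N : Type*} [L.Structure N] [Finite β] {r : ℕ}
    {φ : κ → L.Formula (Fin r ⊕ β)} {b : κ → ℕ → β → N}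
    (h : IsInpArray univ k fun α i => {x : Fin r → N | (φ α).Realize (Sum.elim x (b α i))}) :
    IsInpPattern L N κ r := by
  obtain ⟨m, ⟨e⟩⟩ := Finite.exists_equiv_fin β
  have hφ (α i) (x : Fin r → N) :
      ((φ α).relabel (Sum.map id e)).Realize (Sum.elim x (b α i ∘ e.symm)) ↔
        (φ α).Realize (Sum.elim x (b α i)) := by
    rw [Formula.realize_relabel, Sum.elim_comp_map, Function.comp_assoc, e.symm_comp_self]
    rfl
  refine ⟨fun _ => m, fun α => (φ α).relabel (Sum.map id e), k, fun α i => b α i ∘ e.symm,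
    fun α => ?_, ?_, fun η S => ?_⟩
  · obtain ⟨x, -⟩ := h.path_nonempty 0 fun _ => mem_univ _
    exact h.card_lt α x ∅ (by simp) (by simp)
  · rintro α ⟨x, s, hs, hx⟩
    exact (h.card_lt α x s (subset_univ _) fun i hi => (hφ α i x).1 (hx i hi)).not_ge hs
  · obtain ⟨x, hx⟩ := h.path_nonempty η fun _ => mem_univ _
    exact ⟨x, fun α _ => (hφ α _ x).2 (hx α)⟩

theorem IsInpArray.of_equiv {N N' : Type*} [L.Structure N] [L.Structure N'] {I : Set ℕ}
    {φ : κ → L.Formula (γ ⊕ β)} {b : κ → ℕ → β → N}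
    (h : IsInpArray I k fun α i => {x : γ → N | (φ α).Realize (Sum.elim x (b α i))})
    (e : N ≃[L] N') :
    IsInpArray I k fun α i => {x : γ → N' | (φ α).Realize (Sum.elim x (e ∘ b α i))} := by
  convert h.preimage (f := (e.symm ∘ ·)) e.symm.surjective.comp_left with α i
  ext x
  have hx : Sum.elim (e.symm ∘ x) (b α i) = e.symm ∘ Sum.elim x (e ∘ b α i) := by
    ext (l | j) <;> simp
  simp [hx]

theorem hasBurdenAtLeast_of_isInpArray {M : Type w} [L.Structure M] [Nonempty M] [Finite β]
    {d : ℕ} {k : Fin d → ℕ} {φ : Fin d → L.Formula (Fin 1 ⊕ β)} {b : ℕ → Fin d → ℕ → β → M}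
    (h : ∀ n, IsInpArray (Iio n) k
      fun α i => {x : Fin 1 → M | (φ α).Realize (Sum.elim x (b n α i))}) :
    HasBurdenAtLeast L M d := by
  let P := (hyperfilter ℕ : Filter ℕ).Product fun _ => M
  have hP : P ⊨ L.completeTheory M :=
    ⟨fun σ hσ => (Ultraproduct.sentence_realize σ).2 (Eventually.of_forall fun _ => hσ)⟩
  have hlt (i : ℕ) : ∀ᶠ n in hyperfilter ℕ, i ∈ Iio n :=
    (eventually_gt_atTop i).filter_mono Nat.hyperfilter_le_atTop
  let N : (L.completeTheory M).ModelType := Theory.ModelType.of _ P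
  have e : P ≃[L] Theory.ModelType.ulift.{u, v, w, max u v} N :=
    (Equiv.ulift.{max u v, w}.symm : P ≃ _).inducedStructureEquiv
  exact ⟨_, (IsInpArray.ultraproduct (b := fun α i j n => b n α i j) hlt h).of_equiv e
    |>.isInpPattern⟩

end Burden

section Definability

variable {L : FirstOrder.Language.{u, v}} {M : Type w} [L.Structure M] {A : Set M}
  {α β γ κ : Type*}

theorem definableFun_map₂ {op : M → M → M}
    (hop : A.Definable L {v : Fin 3 → M | op (v 0) (v 1) = v 2}) {f g : (α → M) → M}
    (hf : A.DefinableFun L f) (hg : A.DefinableFun L g) :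
    A.DefinableFun L fun v => op (f v) (g v) := by
  have hop' : A.DefinableFun L fun v : Fin 2 → M => op (v 0) (v 1) :=
    hop.preimage_comp ![some 0, some 1, none]
  have hfg : A.DefinableMap L fun v => ![f v, g v] := by simp [DefinableMap, hf, hg]
  exact hop'.comp hfg

theorem definableFun_sum [AddCommMonoid M] [IsLeftCancelAdd M]
    (hadd : A.Definable L {v : Fin 3 → M | v 0 + v 1 = v 2}) {f : κ → (α → M) → M}
    (hf : ∀ j, A.DefinableFun L (f j)) (s : Finset κ) :
    A.DefinableFun L fun v => ∑ j ∈ s, f j v := by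
  classical
  induction s using Finset.induction_on with
  | empty =>
    -- `0` is the unique solution of `x + x = x`.
    have hzero : {w : Option α → M | w none + w none = w none} =
        (fun v => ∑ j ∈ ∅, f j v).tupleGraph := by
      ext w
      simp [Function.tupleGraph, eq_comm]
    rw [DefinableFun, ← hzero]
    exact hadd.preimage_comp fun _ => none
  | insert j s hj ih => simpa only [Finset.sum_insert hj] using definableFun_map₂ hadd (hf j) ih

theorem definable_mem_image_pi [Finite κ] {X : (β → M) → Set M}
    (hX : A.Definable L {v : Fin 1 ⊕ β → M | v (.inl 0) ∈ X (v ∘ .inr)})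
    {g : (γ ⊕ κ → M) → M} (hg : A.DefinableFun L g) (j : κ) (x y : α) (b : β → α) (c : γ → α) :
    A.Definable L {v : α → M |
      v x ∈ (fun z => g (Sum.elim (v ∘ c) z)) '' {z ∈ univ.pi fun _ => X (v ∘ b) | z j = v y}} := by
  have hmem : A.Definable L {w : α ⊕ κ → M | ∀ l, w (.inr l) ∈ X (w ∘ .inl ∘ b)} := by
    rw [ofPred_forall]
    exact definable_iInter_of_finite fun l =>
      hX.preimage_comp (Sum.elim (fun _ => .inr l) (.inl ∘ b) : Fin 1 ⊕ β → α ⊕ κ)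
  have hcoord : A.Definable L {w : α ⊕ κ → M | w (.inr j) = w (.inl y)} :=
    DefinableFun.ofPred_eq (.proj L) (.proj L)
  have hval : A.Definable L {w : α ⊕ κ → M | g (w ∘ Sum.map c id) = w (.inl x)} :=
    hg.preimage_comp (Option.elim · (.inl x) (Sum.map c id) : Option (γ ⊕ κ) → α ⊕ κ)
  convert! ((hmem.inter hcoord).inter hval).exists_of_finite with v
  simp [Sum.elim_comp_map, ← Function.comp_assoc]

theorem hasBurdenAtLeast_of_injOn [Nonempty M] [Finite β] [Finite γ] {d : ℕ} {X : (β → M) → Set M}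
    (hX : (∅ : Set M).Definable L {v : Fin 1 ⊕ β → M | v (.inl 0) ∈ X (v ∘ .inr)})
    {g : (γ ⊕ Fin d → M) → M} (hg : (∅ : Set M).DefinableFun L g)
    (h : ∀ n : ℕ, ∃ b c, n ≤ (X b).encard ∧
      InjOn (fun z => g (Sum.elim c z)) (univ.pi fun _ => X b)) :
    HasBurdenAtLeast L M d := by
  choose b c hcard hinj using h
  have hseq (n : ℕ) : ∃ e : ℕ → M, Iio n ⊆ e ⁻¹' X (b n) ∧ InjOn e (Iio n) :=
    (finite_Iio n).exists_injOn_of_encard_le ((Nat.encard_range n).trans_le (hcard n))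
  choose e heX he using hseq
  let x : Fin 1 ⊕ (Fin 1 ⊕ (γ ⊕ β)) := .inl 0
  let y : Fin 1 ⊕ (Fin 1 ⊕ (γ ⊕ β)) := .inr (.inl 0)
  choose φ hφ using fun j => empty_definable_iff.1
    (definable_mem_image_pi hX hg j x y (.inr ∘ .inr ∘ .inr) (.inr ∘ .inr ∘ .inl))
  refine hasBurdenAtLeast_of_isInpArray (k := fun _ => 2) (φ := φ)
    (b := fun n _ i => Sum.elim (fun _ => e n i) (Sum.elim (c n) (b n))) fun n => ?_
  convert (isInpArray_image_pi (hinj n) (heX n) (he n)).preimage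
    (f := fun x : Fin 1 → M => x 0) (Function.surjective_eval 0) with j i
  ext x
  exact (Set.ext_iff.1 (hφ j) _).symm

end Definability

section LinearForms

variable {R : Type*} [NonUnitalNonAssocRing R] [NoZeroDivisors R]

theorem subsingleton_mul_add_eq_mul_add {p q : R × R} (hpq : p ≠ q) :
    {a | a * p.1 + p.2 = a * q.1 + q.2}.Subsingleton := by
  intro a (ha : a * p.1 + p.2 = a * q.1 + q.2) a' (ha' : a' * p.1 + p.2 = a' * q.1 + q.2)
  have hsub {r : R} (hr : r * p.1 + p.2 = r * q.1 + q.2) : r * (p.1 - q.1) = q.2 - p.2 := by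
    rw [mul_sub, sub_eq_sub_iff_add_eq_add, hr, add_comm]
  have hfst : p.1 ≠ q.1 := fun h => hpq (Prod.ext h (by simpa [h] using ha))
  exact mul_right_cancel₀ (sub_ne_zero.2 hfst) ((hsub ha).trans (hsub ha').symm)

variable [Infinite R] {X : Set R}

theorem exists_injOn_mul_add {Y : Set R} (hX : X.Finite) (hY : Y.Finite) :
    ∃ a : R, InjOn (fun p : R × R => a * p.1 + p.2) (X ×ˢ Y) := by
  obtain ⟨a, ha⟩ := ((hX.prod hY).offDiag.biUnion fun w hw =>
    (subsingleton_mul_add_eq_mul_add hw.2.2).finite).exists_notMem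
  simp only [mem_iUnion, not_exists] at ha
  exact ⟨a, fun p hp q hq hpq => by_contra fun hne => ha (p, q) ⟨hp, hq, hne⟩ hpq⟩

theorem exists_injOn_sum_mul (hX : X.Finite) (d : ℕ) :
    ∃ c : Fin d → R, InjOn (fun z => ∑ j, c j * z j) (univ.pi fun _ => X) := by
  induction d with
  | zero => exact ⟨0, injOn_of_subsingleton _ _⟩
  | succ d ih =>
    obtain ⟨c, hc⟩ := ih
    obtain ⟨a, ha⟩ :=
      exists_injOn_mul_add hX ((Finite.pi fun _ => hX).image fun z => ∑ j, c j * z j)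
    refine ⟨Fin.cons a c, fun z hz z' hz' hzz' => ?_⟩
    have htail {z : Fin (d + 1) → R} (hz : z ∈ univ.pi fun _ => X) :
        Fin.tail z ∈ univ.pi fun _ => X := fun j _ => hz j.succ (mem_univ _)
    have hmem {z : Fin (d + 1) → R} (hz : z ∈ univ.pi fun _ => X) :
        (z 0, ∑ j, c j * Fin.tail z j) ∈
          X ×ˢ ((fun z => ∑ j, c j * z j) '' univ.pi fun _ => X) :=
      ⟨hz 0 (mem_univ _), mem_image_of_mem _ (htail hz)⟩
    obtain ⟨h0, hsum⟩ := Prod.mk.inj (ha (hmem hz) (hmem hz') (by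
      simpa only [Fin.sum_univ_succ, Fin.cons_zero, Fin.cons_succ] using! hzz'))
    rw [← Fin.cons_self_tail z, ← Fin.cons_self_tail z', h0, hc (htail hz) (htail hz') hsum]

end LinearForms

theorem statement_1_general {L : FirstOrder.Language.{u, v}} {R : Type w}
    [NonUnitalNonAssocRing R] [NoZeroDivisors R] [L.Structure R]
    (hadd : (∅ : Set R).Definable L {v : Fin 3 → R | v 0 + v 1 = v 2})
    (hmul : (∅ : Set R).Definable L {v : Fin 3 → R | v 0 * v 1 = v 2})
    (hfb : HasFiniteBurden L R) :
    ∀ (m : ℕ) (φ : L.Formula (Fin 1 ⊕ Fin m)), ∃ n : ℕ, ∀ b : Fin m → R,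
      (n : ℕ∞) < {a : R | φ.Realize (Sum.elim (fun _ => a) b)}.encard →
      {a : R | φ.Realize (Sum.elim (fun _ => a) b)}.Infinite := by
  intro m φ
  by_contra! hunbounded
  choose b hcard hfin using hunbounded
  obtain ⟨d, hd⟩ := hfb
  have : Infinite R := ENat.card_eq_top.1 <| ENat.eq_top_iff_forall_gt.2 fun n =>
    (hcard n).trans_le encard_le_card
  let X (b : Fin m → R) : Set R := {a | φ.Realize (Sum.elim (fun _ => a) b)}
  have hX : (∅ : Set R).Definable L {v : Fin 1 ⊕ Fin m → R | v (.inl 0) ∈ X (v ∘ .inr)} := by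
    refine empty_definable_iff.2 ⟨φ, ?_⟩
    ext v
    have hv : Sum.elim (fun _ => v (.inl 0)) (v ∘ .inr) = v := by
      ext (l | l)
      · rw [Subsingleton.elim l 0, Sum.elim_inl]
      · rfl
    simp [X, hv]
  have hg : (∅ : Set R).DefinableFun L fun v : Fin (d + 1) ⊕ Fin (d + 1) → R =>
      ∑ j, v (.inl j) * v (.inr j) :=
    definableFun_sum hadd (fun _ => definableFun_map₂ hmul (.proj L) (.proj L)) _
  refine hd (hasBurdenAtLeast_of_injOn hX hg fun n => ?_)
  obtain ⟨c, hc⟩ := exists_injOn_sum_mul (hfin n) (d + 1)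
  exact ⟨b n, c, (hcard n).le, hc⟩

/-- If `L` extends the language of rings, `F` is a field which is an
`L`-structure interpreting the ring symbols standardly, and `Th(F)` has finite burden, then
`F` has uniform finiteness: for every formula `φ(x; ȳ)` there is `n` such that for all
parameters `b̄`, if `φ(F; b̄)` has more than `n` elements then it is infinite. -/
theorem statement_1 {L : FirstOrder.Language.{u, v}} {F : Type w} [Field F] [L.Structure F]
    (hzero : (∅ : Set F).Definable₁ L {x : F | x = 0})
    (hone : (∅ : Set F).Definable₁ L {x : F | x = 1})
    (hneg : (∅ : Set F).Definable L {v : Fin 2 → F | v 1 = -v 0})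
    (hadd : (∅ : Set F).Definable L {v : Fin 3 → F | v 0 + v 1 = v 2})
    (hmul : (∅ : Set F).Definable L {v : Fin 3 → F | v 0 * v 1 = v 2})
    (hfb : HasFiniteBurden L F) :
    ∀ (m : ℕ) (φ : L.Formula (Fin 1 ⊕ Fin m)), ∃ n : ℕ, ∀ b : Fin m → F,
      (n : ℕ∞) < {a : F | φ.Realize (Sum.elim (fun _ => a) b)}.encard →
      {a : F | φ.Realize (Sum.elim (fun _ => a) b)}.Infinite :=
  statement_1_general hadd hmul hfb
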